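/- For every n ≥ 2, any subset D of the 2-dimensional isotropic subspaces of (ZMod 2)^{2n} that admits a pairwise consistent family of outcomes (f_x)_{x∈D} satisfies |D| ≤ (4/5)·|L^n_2|. That is, Pval(↓L^n_2) ≤ 4/5. -/

import Mathlib

open Finset

abbrev F2 := ZMod 2
/-- `F2^{2n}`, split into the first and last `n` coordinates. -/
abbrev PV (n : ℕ) := (Fin n → F2) × (Fin n → F2)

/-- Symplectic product on `F2^{2n}`: zero iff `a₁·b₂ = a₂·b₁`. -/
def symp {n : ℕ} (a b : PV n) : F2 :=
  (∑ i, a.1 i * b.2 i) + (∑ i, a.2 i * b.1 i)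

/-- A subspace is isotropic if the symplectic product vanishes on it. -/
def IsIsotropic {n : ℕ} (S : Submodule F2 (PV n)) : Prop :=
  ∀ x ∈ S, ∀ y ∈ S, symp x y = 0

/-- `Lset n k` = `L^n_k`, the set of `k`-dimensional isotropic subspaces of `F2^{2n}`. -/
def Lset (n k : ℕ) : Set (Submodule F2 (PV n)) :=
  {S | IsIsotropic S ∧ Module.finrank F2 S = k}

/-- Integer lift of a vector over `F2`, with values in `{0,1} ⊆ ℤ`. -/
def liftZ {n : ℕ} (v : Fin n → F2) : Fin n → ℤ := fun i => ((v i).val : ℤ)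

def dotZ {n : ℕ} (a b : Fin n → ℤ) : ℤ := ∑ i, a i * b i

/-- The phase `i^{x̂₁·x̂₂} · i^{ŷ₁·ŷ₂} · i^{−((x+y)^^₁·(x+y)^^₂)} · (−1)^{x̂₂·ŷ₁}`. -/
noncomputable def phase {n : ℕ} (x y : PV n) : ℂ :=
  Complex.I ^ (dotZ (liftZ x.1) (liftZ x.2)) *
  Complex.I ^ (dotZ (liftZ y.1) (liftZ y.2)) *
  Complex.I ^ (-(dotZ (liftZ (x + y).1) (liftZ (x + y).2))) *
  (-1 : ℂ) ^ (dotZ (liftZ x.2) (liftZ y.1))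

/-- `w(x,y) ∈ {0,1} ⊆ F2`: zero iff the phase equals `1`. -/
noncomputable def wght {n : ℕ} (x y : PV n) : F2 :=
  if phase x y = 1 then 0 else 1

/-- An outcome of an isotropic subspace `S` is `f : S → F2` with
`f(x+y) = f(x)+f(y)+w(x,y)`. -/
def IsOutcome {n : ℕ} (S : Submodule F2 (PV n)) (f : S → F2) : Prop :=
  ∀ x y : S, f (x + y) = f x + f y + wght (x : PV n) (y : PV n)

/-- Two outcomes are consistent if they agree on the intersection of their domains. -/
def ConsistentOn {n : ℕ} {S₁ S₂ : Submodule F2 (PV n)} (f₁ : S₁ → F2) (f₂ : S₂ → F2) : Prop :=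
  ∀ v (h1 : v ∈ S₁) (h2 : v ∈ S₂), f₁ ⟨v, h1⟩ = f₂ ⟨v, h2⟩


/-! ### The phase -/

theorem symp_comm {n : ℕ} (a b : PV n) : symp a b = symp b a := by
  unfold symp
  rw [add_comm]
  congr 1 <;> exact Finset.sum_congr rfl fun i _ => mul_comm _ _

theorem symp_add_left {n : ℕ} (a b c : PV n) : symp (a + b) c = symp a c + symp b c := by
  simp only [symp, Prod.fst_add, Prod.snd_add, Pi.add_apply, add_mul, Finset.sum_add_distrib]
  ring

theorem symp_add_right {n : ℕ} (a b c : PV n) : symp a (b + c) = symp a b + symp a c := by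
  rw [symp_comm, symp_add_left, symp_comm b, symp_comm c]

theorem symp_self {n : ℕ} (a : PV n) : symp a a = 0 := by
  have h : (∑ i, a.1 i * a.2 i) = ∑ i, a.2 i * a.1 i :=
    Finset.sum_congr rfl fun i _ => mul_comm _ _
  rw [symp, h]
  exact CharTwo.add_self_eq_zero _

/-- The exponent function `x₁·x₂`. -/
def qz {n : ℕ} (x : PV n) : ℤ := dotZ (liftZ x.1) (liftZ x.2)

/-- The exponent function `x₂·y₁`. -/
def bz {n : ℕ} (x y : PV n) : ℤ := dotZ (liftZ x.2) (liftZ y.1)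

theorem dotZ_cast {n : ℕ} (u v : Fin n → F2) :
    ((dotZ (liftZ u) (liftZ v) : ℤ) : F2) = ∑ i, u i * v i := by
  simp [dotZ, liftZ]

theorem phase_eq {n : ℕ} (x y : PV n) :
    phase x y = Complex.I ^ (qz x + qz y - qz (x + y) + 2 * bz x y) := by
  have hI := Complex.I_ne_zero
  rw [zpow_add₀ hI, zpow_sub₀ hI, zpow_add₀ hI, zpow_mul]
  have h2 : Complex.I ^ (2 : ℤ) = -1 := by
    have := Complex.I_sq
    exact_mod_cast this
  rw [h2, phase, zpow_neg, div_eq_mul_inv]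
  rfl

theorem I_zpow_two_mul (m : ℤ) : Complex.I ^ (2 * m) = (-1 : ℂ) ^ m := by
  rw [zpow_mul]
  congr 1
  have := Complex.I_sq
  exact_mod_cast this

theorem even_iff_cast (m : ℤ) : ((m : ℤ) : F2) = 0 ↔ Even m := by
  rw [ZMod.intCast_zmod_eq_zero_iff_dvd, even_iff_two_dvd]
  rfl

theorem phase_sign {n : ℕ} (x y : PV n) (h : symp x y = 0) :
    phase x y = 1 ∨ phase x y = -1 := by
  have he : Even (qz x + qz y - qz (x + y)) := by
    rw [← even_iff_cast]
    have h1 : ((qz x + qz y - qz (x + y) : ℤ) : F2) = - symp x y := by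
      simp only [qz, Int.cast_sub, Int.cast_add, dotZ_cast, symp, Prod.fst_add, Prod.snd_add,
        Pi.add_apply, add_mul, mul_add, Finset.sum_add_distrib]
      have h3 : (∑ i, y.1 i * x.2 i) = ∑ i, x.2 i * y.1 i :=
        Finset.sum_congr rfl fun i _ => mul_comm _ _
      rw [h3]
      ring
    rw [h1, h, neg_zero]
  obtain ⟨m, hm⟩ := he
  have : qz x + qz y - qz (x + y) + 2 * bz x y = 2 * (m + bz x y) := by rw [hm]; ring
  rw [phase_eq, this, I_zpow_two_mul]
  rcases Int.even_or_odd (m + bz x y) with h | h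
  · left; exact h.neg_one_zpow
  · right; exact h.neg_one_zpow

theorem phase_grid {n : ℕ} (x1 x2 y1 y2 : PV n) (h : symp x2 y1 = 1) :
    phase x1 x2 * phase y1 y2 * phase (x1 + x2) (y1 + y2) =
      - (phase x1 y1 * phase x2 y2 * phase (x1 + y1) (x2 + y2)) := by
  have hI := Complex.I_ne_zero
  simp only [phase_eq, ← zpow_add₀ hI]
  have hs : x1 + x2 + (y1 + y2) = x1 + y1 + (x2 + y2) := by abel
  rw [hs]
  set B : ℤ := bz x1 x2 + bz y1 y2 + bz (x1 + x2) (y1 + y2)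
    - (bz x1 y1 + bz x2 y2 + bz (x1 + y1) (x2 + y2)) with hB
  have hodd : Odd B := by
    rw [← Int.not_even_iff_odd, ← even_iff_cast]
    have : ((B : ℤ) : F2) = symp x2 y1 := by
      rw [hB]
      simp only [bz, Int.cast_sub, Int.cast_add, dotZ_cast, symp, Prod.fst_add, Prod.snd_add,
        Pi.add_apply, add_mul, mul_add, Finset.sum_add_distrib]
      have h3 : (∑ i, y1.2 i * x2.1 i) = ∑ i, x2.1 i * y1.2 i :=
        Finset.sum_congr rfl fun i _ => mul_comm _ _
      rw [h3]
      generalize (∑ i, x2.1 i * y1.2 i) = u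
      ring_nf
      rw [sub_eq_add_neg, ZMod.neg_eq_self_mod_two]
    rw [this, h]
    decide
  have key : Complex.I ^ (2 * B) = -1 := by
    rw [I_zpow_two_mul]; exact hodd.neg_one_zpow
  have : ∀ p q : ℤ, p = q + 2 * B → Complex.I ^ p = - Complex.I ^ q := by
    intro p q hpq
    rw [hpq, zpow_add₀ hI, key]; ring
  apply this
  rw [hB]
  ring

theorem phase_wght {n : ℕ} (x y : PV n) (h : symp x y = 0) :
    (wght x y = 0 ∧ phase x y = 1) ∨ (wght x y = 1 ∧ phase x y = -1) := by
  rcases phase_sign x y h with h | h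
  · left; exact ⟨by simp [wght, h], h⟩
  · right
    refine ⟨?_, h⟩
    have : (-1 : ℂ) ≠ 1 := by norm_num
    simp [wght, h, this]

theorem wght_grid {n : ℕ} (x1 x2 y1 y2 : PV n) (h : symp x2 y1 = 1)
    (h1 : symp x1 x2 = 0) (h2 : symp y1 y2 = 0) (h3 : symp (x1 + x2) (y1 + y2) = 0)
    (h4 : symp x1 y1 = 0) (h5 : symp x2 y2 = 0) (h6 : symp (x1 + y1) (x2 + y2) = 0) :
    wght x1 x2 + wght y1 y2 + wght (x1 + x2) (y1 + y2) + wght x1 y1 + wght x2 y2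
      + wght (x1 + y1) (x2 + y2) = 1 := by
  have key := phase_grid x1 x2 y1 y2 h
  rcases phase_wght _ _ h1 with ⟨w1, p1⟩ | ⟨w1, p1⟩ <;>
  rcases phase_wght _ _ h2 with ⟨w2, p2⟩ | ⟨w2, p2⟩ <;>
  rcases phase_wght _ _ h3 with ⟨w3, p3⟩ | ⟨w3, p3⟩ <;>
  rcases phase_wght _ _ h4 with ⟨w4, p4⟩ | ⟨w4, p4⟩ <;>
  rcases phase_wght _ _ h5 with ⟨w5, p5⟩ | ⟨w5, p5⟩ <;>
  rcases phase_wght _ _ h6 with ⟨w6, p6⟩ | ⟨w6, p6⟩ <;>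
  rw [p1, p2, p3, p4, p5, p6] at key <;>
  rw [w1, w2, w3, w4, w5, w6] <;>
  first
    | decide
    | (exfalso; norm_num at key)

/-! ### Lines and grids -/

/-- Indicator that the span of three points belongs to `D`. -/
noncomputable def hl {n : ℕ} (D : Set (Submodule F2 (PV n))) (x y z : PV n) : ℤ :=
  open Classical in if Submodule.span F2 {x, y, z} ∈ D then 1 else 0

theorem hl_le {n : ℕ} (D : Set (Submodule F2 (PV n))) (x y z : PV n) : hl D x y z ≤ 1 := by
  unfold hl; split_ifs <;> norm_num

theorem hl_mem {n : ℕ} {D : Set (Submodule F2 (PV n))} {x y z : PV n} (h : hl D x y z = 1) :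
    Submodule.span F2 {x, y, z} ∈ D := by
  unfold hl at h; by_contra h'; simp [h'] at h

theorem hl_cases {n : ℕ} (D : Set (Submodule F2 (PV n))) (x y z : PV n) :
    hl D x y z = 0 ∨ hl D x y z = 1 := by
  unfold hl; split_ifs <;> simp

theorem hl_swap {n : ℕ} (D : Set (Submodule F2 (PV n))) (x y z : PV n) :
    hl D x y z = hl D y x z := by
  unfold hl; rw [Set.insert_comm]

theorem hl_rot {n : ℕ} (D : Set (Submodule F2 (PV n))) (x y z : PV n) :
    hl D x y z = hl D y z x := by
  unfold hl
  have : ({x, y, z} : Set (PV n)) = {y, z, x} := by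
    ext; simp only [Set.mem_insert_iff, Set.mem_singleton_iff]; tauto
  rw [this]

/-- `s` is a sign assignment satisfying all the constraints from `D`. -/
def Sat {n : ℕ} (D : Set (Submodule F2 (PV n))) (s : PV n → F2) : Prop :=
  ∀ S ∈ D, ∀ x ∈ S, ∀ y ∈ S, symp x y = 0 ∧ s (x + y) = s x + s y + wght x y

theorem exists_sat {n : ℕ} (D : Set (Submodule F2 (PV n))) (hD : D ⊆ Lset n 2)
    (f : (S : Submodule F2 (PV n)) → (S → F2)) (h1 : ∀ S ∈ D, IsOutcome S (f S))
    (h2 : ∀ S₁ ∈ D, ∀ S₂ ∈ D, ConsistentOn (f S₁) (f S₂)) : ∃ s, Sat D s := by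
  classical
  let s : PV n → F2 := fun v =>
    if h : ∃ S : Submodule F2 (PV n), S ∈ D ∧ v ∈ S then
      f h.choose ⟨v, h.choose_spec.2⟩ else 0
  have hs : ∀ S ∈ D, ∀ v (hv : v ∈ S), s v = f S ⟨v, hv⟩ := by
    intro S hS v hv
    have h : ∃ S : Submodule F2 (PV n), S ∈ D ∧ v ∈ S := ⟨S, hS, hv⟩
    simp only [s, dif_pos h]
    exact h2 _ h.choose_spec.1 _ hS v _ _
  refine ⟨s, fun S hS x hx y hy => ⟨(hD hS).1 x hx y hy, ?_⟩⟩
  rw [hs S hS x hx, hs S hS y hy, hs S hS (x + y) (S.add_mem hx hy)]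
  exact h1 S hS ⟨x, hx⟩ ⟨y, hy⟩

theorem sat_line {n : ℕ} {D : Set (Submodule F2 (PV n))} {s : PV n → F2} (hs : Sat D s)
    {x y z : PV n} (h : hl D x y z = 1) : symp x y = 0 ∧ s (x + y) = s x + s y + wght x y :=
  hs _ (hl_mem h) x (Submodule.subset_span (by simp)) y (Submodule.subset_span (by simp))

theorem grid {n : ℕ} {D : Set (Submodule F2 (PV n))} {s : PV n → F2} (hs : Sat D s)
    (p11 p12 p13 p21 p22 p23 p31 p32 p33 : PV n) (h : symp p12 p21 = 1)
    (e1 : p13 = p11 + p12) (e2 : p23 = p21 + p22) (e3 : p31 = p11 + p21)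
    (e4 : p32 = p12 + p22) (e5 : p33 = p13 + p23) :
    hl D p11 p12 p13 + hl D p21 p22 p23 + hl D p31 p32 p33
      + hl D p11 p21 p31 + hl D p12 p22 p32 + hl D p13 p23 p33 ≤ 5 := by
  by_contra hcon
  have b1 := hl_le D p11 p12 p13
  have b2 := hl_le D p21 p22 p23
  have b3 := hl_le D p31 p32 p33
  have b4 := hl_le D p11 p21 p31
  have b5 := hl_le D p12 p22 p32
  have b6 := hl_le D p13 p23 p33
  obtain ⟨c1, s1⟩ := sat_line hs (x := p11) (y := p12) (z := p13) (by omega)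
  obtain ⟨c2, s2⟩ := sat_line hs (x := p21) (y := p22) (z := p23) (by omega)
  obtain ⟨c3, s3⟩ := sat_line hs (x := p31) (y := p32) (z := p33) (by omega)
  obtain ⟨c4, s4⟩ := sat_line hs (x := p11) (y := p21) (z := p31) (by omega)
  obtain ⟨c5, s5⟩ := sat_line hs (x := p12) (y := p22) (z := p32) (by omega)
  obtain ⟨c6, s6⟩ := sat_line hs (x := p13) (y := p23) (z := p33) (by omega)
  clear b1 b2 b3 b4 b5 b6 hcon
  subst e1 e2 e3 e4 e5
  have key := wght_grid p11 p12 p21 p22 h c1 c2 c6 c4 c5 c3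
  have hsum : p11 + p21 + (p12 + p22) = p11 + p12 + (p21 + p22) := by abel
  rw [hsum] at s3
  generalize wght p11 p12 = w1 at *
  generalize wght p21 p22 = w2 at *
  generalize wght (p11 + p12) (p21 + p22) = w3 at *
  generalize wght p11 p21 = w4 at *
  generalize wght p12 p22 = w5 at *
  generalize wght (p11 + p21) (p12 + p22) = w6 at *
  rw [s6, s1, s2, s4, s5] at s3
  have h2 : (2 : F2) = 0 := rfl
  have : w1 + w2 + w3 + w4 + w5 + w6 = 0 := by
    linear_combination s3 + (w4 + w5 + w6) * h2
  rw [this] at key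
  exact absurd key (by decide)

theorem hl_rot2 {n : ℕ} (D : Set (Submodule F2 (PV n))) (x y z : PV n) :
    hl D x y z = hl D z x y := by rw [hl_rot, hl_rot]

theorem hl_swap2 {n : ℕ} (D : Set (Submodule F2 (PV n))) (x y z : PV n) :
    hl D x y z = hl D x z y := by rw [hl_swap, hl_rot]

theorem hl_swap3 {n : ℕ} (D : Set (Submodule F2 (PV n))) (x y z : PV n) :
    hl D x y z = hl D z y x := by rw [hl_swap, hl_rot2]

theorem add_self2 {n : ℕ} (x : PV n) : x + x = 0 := by
  ext i <;> exact CharTwo.add_self_eq_zero _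

theorem add_self2_left {n : ℕ} (x y : PV n) : x + (x + y) = y := by
  rw [← add_assoc, add_self2, zero_add]

theorem add_self2_right {n : ℕ} (x y : PV n) : x + (y + x) = y := by
  rw [add_comm y, add_self2_left]

/-- Symplectic frames. -/
def Fr {n : ℕ} (t : PV n × PV n × PV n × PV n) : Prop :=
  symp t.1 t.2.1 = 1 ∧ symp t.2.2.1 t.2.2.2 = 1 ∧ symp t.1 t.2.2.1 = 0 ∧
    symp t.1 t.2.2.2 = 0 ∧ symp t.2.1 t.2.2.1 = 0 ∧ symp t.2.1 t.2.2.2 = 0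

/-- Sum of a function over all symplectic frames. -/
noncomputable def Q {n : ℕ} (F : PV n → PV n → PV n → PV n → ℤ) : ℤ :=
  open Classical in
  ∑ t : PV n × PV n × PV n × PV n, if Fr t then F t.1 t.2.1 t.2.2.1 t.2.2.2 else 0

theorem Q_invol {n : ℕ} (g : PV n × PV n × PV n × PV n → PV n × PV n × PV n × PV n)
    (hg : Function.Involutive g) (hF : ∀ t, Fr t → Fr (g t))
    (F : PV n → PV n → PV n → PV n → ℤ) :
    Q F = Q (fun a b c d => F (g (a, b, c, d)).1 (g (a, b, c, d)).2.1 (g (a, b, c, d)).2.2.1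
      (g (a, b, c, d)).2.2.2) := by
  classical
  unfold Q
  rw [← Equiv.sum_comp hg.toPerm]
  refine Finset.sum_congr rfl fun t _ => ?_
  have : Fr (g t) ↔ Fr t := by
    refine ⟨fun h => ?_, hF t⟩
    have := hF _ h
    rwa [hg t] at this
  simp only [Function.Involutive.coe_toPerm, this]

theorem Q_swap {n : ℕ} (F : PV n → PV n → PV n → PV n → ℤ) :
    Q F = Q (fun a b c d => F c d a b) := by
  refine Q_invol (fun t => (t.2.2.1, t.2.2.2, t.1, t.2.1)) (fun t => rfl) ?_ F
  rintro ⟨a, b, c, d⟩ ⟨h1, h2, h3, h4, h5, h6⟩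
  exact ⟨h2, h1, by rwa [symp_comm], by rwa [symp_comm], by rwa [symp_comm], by rwa [symp_comm]⟩

theorem Q_had {n : ℕ} (F : PV n → PV n → PV n → PV n → ℤ) :
    Q F = Q (fun a b c d => F b a c d) := by
  refine Q_invol (fun t => (t.2.1, t.1, t.2.2.1, t.2.2.2)) (fun t => rfl) ?_ F
  rintro ⟨a, b, c, d⟩ ⟨h1, h2, h3, h4, h5, h6⟩
  exact ⟨by rwa [symp_comm], h2, h5, h6, h3, h4⟩

theorem Q_shear {n : ℕ} (F : PV n → PV n → PV n → PV n → ℤ) :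
    Q F = Q (fun a b c d => F (a + b) b c d) := by
  refine Q_invol (fun t => (t.1 + t.2.1, t.2.1, t.2.2.1, t.2.2.2)) (fun t => ?_) ?_ F
  · simp only [add_assoc, add_self2, add_zero]
  rintro ⟨a, b, c, d⟩ ⟨h1, h2, h3, h4, h5, h6⟩
  simp only at h1 h2 h3 h4 h5 h6
  simp [Fr, symp_add_left, symp_self, h1, h2, h3, h4, h5, h6]

theorem Q_cnot {n : ℕ} (F : PV n → PV n → PV n → PV n → ℤ) :
    Q F = Q (fun a b c d => F (a + c) b c (d + b)) := by
  refine Q_invol (fun t => (t.1 + t.2.2.1, t.2.1, t.2.2.1, t.2.2.2 + t.2.1)) (fun t => ?_) ?_ F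
  · simp only [add_assoc, add_self2, add_zero]
  rintro ⟨a, b, c, d⟩ ⟨h1, h2, h3, h4, h5, h6⟩
  simp only at h1 h2 h3 h4 h5 h6
  have h5' : symp c b = 0 := by rwa [symp_comm]
  have h : (1 : F2) + 1 = 0 := rfl
  simp [Fr, symp_add_left, symp_add_right, symp_self, h1, h2, h3, h4, h5, h6, h5', h]

theorem hl_cast {n : ℕ} (D : Set (Submodule F2 (PV n))) {x y z u v w : PV n}
    (h1 : x = u) (h2 : y = v) (h3 : z = w) : hl D x y z = hl D u v w := by
  rw [h1, h2, h3]

theorem Q_congr {n : ℕ} {F G : PV n → PV n → PV n → PV n → ℤ}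
    (h : ∀ a b c d, F a b c d = G a b c d) : Q F = Q G := by
  have : F = G := by funext a b c d; exact h a b c d
  rw [this]

set_option linter.unusedSimpArgs false
set_option linter.unusedVariables false

theorem Q_add {n : ℕ} (F G : PV n → PV n → PV n → PV n → ℤ) :
    Q (fun a b c d => F a b c d + G a b c d) = Q F + Q G := by
  classical
  unfold Q
  rw [← Finset.sum_add_distrib]
  refine Finset.sum_congr rfl fun t _ => ?_
  split_ifs <;> simp

theorem one_add_one_F2 : (1 : F2) + 1 = 0 := rfl

theorem Q_lines {n : ℕ} (D : Set (Submodule F2 (PV n))) :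
    Q (fun a b c d : PV n =>
      hl D a c (a + c)
      + hl D b c (b + c)
      + hl D (a + b) c (a + (b + c))
      + hl D d a (a + d)
      + hl D (c + d) a (a + (c + d))
      + hl D d b (b + d)
      + hl D d (a + b) (a + (b + d))
      + hl D (b + d) (a + c) (a + (b + (c + d)))
      + hl D (c + d) b (b + (c + d))
      + hl D (c + d) (a + b) (a + (b + (c + d)))
      + hl D (b + (c + d)) (a + c) (a + (b + d))
      + hl D (b + d) (a + (b + c)) (a + (c + d))
      + hl D (a + d) (b + c) (a + (b + (c + d)))
      + hl D (b + (c + d)) (a + (b + c)) (a + d)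
      + hl D (a + (c + d)) (b + c) (a + (b + d))) =
      15 * Q (fun a _ c _ : PV n => hl D a c (a + c)) := by
  have h0 : Q (fun a b c d : PV n => hl D a c (a + c)) = Q (fun a _ c _ : PV n => hl D a c (a + c)) := rfl
  have h1 : Q (fun a b c d : PV n => hl D b c (b + c)) = Q (fun a _ c _ : PV n => hl D a c (a + c)) := by
    have e := Q_had (fun a b c d : PV n => hl D a c (a + c))
    refine (Q_congr fun a b c d => hl_cast D ?_ ?_ ?_).trans (e.symm.trans h0) <;> simp only [add_assoc, add_comm, add_left_comm, add_self2, add_self2_left, add_self2_right, add_zero, zero_add]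
  have h2 : Q (fun a b c d : PV n => hl D (a + b) c (a + (b + c))) = Q (fun a _ c _ : PV n => hl D a c (a + c)) := by
    have e := Q_shear (fun a b c d : PV n => hl D a c (a + c))
    refine (Q_congr fun a b c d => hl_cast D ?_ ?_ ?_).trans (e.symm.trans h0) <;> simp only [add_assoc, add_comm, add_left_comm, add_self2, add_self2_left, add_self2_right, add_zero, zero_add]
  have h3 : Q (fun a b c d : PV n => hl D d a (a + d)) = Q (fun a _ c _ : PV n => hl D a c (a + c)) := by
    have e := Q_swap (fun a b c d : PV n => hl D b c (b + c))
    refine (Q_congr fun a b c d => hl_cast D ?_ ?_ ?_).trans (e.symm.trans h1) <;> simp only [add_assoc, add_comm, add_left_comm, add_self2, add_self2_left, add_self2_right, add_zero, zero_add]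
  have h4 : Q (fun a b c d : PV n => hl D (c + d) a (a + (c + d))) = Q (fun a _ c _ : PV n => hl D a c (a + c)) := by
    have e := Q_swap (fun a b c d : PV n => hl D (a + b) c (a + (b + c)))
    refine (Q_congr fun a b c d => hl_cast D ?_ ?_ ?_).trans (e.symm.trans h2) <;> simp only [add_assoc, add_comm, add_left_comm, add_self2, add_self2_left, add_self2_right, add_zero, zero_add]
  have h5 : Q (fun a b c d : PV n => hl D d b (b + d)) = Q (fun a _ c _ : PV n => hl D a c (a + c)) := by
    have e := Q_had (fun a b c d : PV n => hl D d a (a + d))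
    refine (Q_congr fun a b c d => hl_cast D ?_ ?_ ?_).trans (e.symm.trans h3) <;> simp only [add_assoc, add_comm, add_left_comm, add_self2, add_self2_left, add_self2_right, add_zero, zero_add]
  have h6 : Q (fun a b c d : PV n => hl D d (a + b) (a + (b + d))) = Q (fun a _ c _ : PV n => hl D a c (a + c)) := by
    have e := Q_shear (fun a b c d : PV n => hl D d a (a + d))
    refine (Q_congr fun a b c d => hl_cast D ?_ ?_ ?_).trans (e.symm.trans h3) <;> simp only [add_assoc, add_comm, add_left_comm, add_self2, add_self2_left, add_self2_right, add_zero, zero_add]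
  have h7 : Q (fun a b c d : PV n => hl D (b + d) (a + c) (a + (b + (c + d)))) = Q (fun a _ c _ : PV n => hl D a c (a + c)) := by
    have e := Q_cnot (fun a b c d : PV n => hl D d a (a + d))
    refine (Q_congr fun a b c d => hl_cast D ?_ ?_ ?_).trans (e.symm.trans h3) <;> simp only [add_assoc, add_comm, add_left_comm, add_self2, add_self2_left, add_self2_right, add_zero, zero_add]
  have h8 : Q (fun a b c d : PV n => hl D (c + d) b (b + (c + d))) = Q (fun a _ c _ : PV n => hl D a c (a + c)) := by
    have e := Q_had (fun a b c d : PV n => hl D (c + d) a (a + (c + d)))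
    refine (Q_congr fun a b c d => hl_cast D ?_ ?_ ?_).trans (e.symm.trans h4) <;> simp only [add_assoc, add_comm, add_left_comm, add_self2, add_self2_left, add_self2_right, add_zero, zero_add]
  have h9 : Q (fun a b c d : PV n => hl D (c + d) (a + b) (a + (b + (c + d)))) = Q (fun a _ c _ : PV n => hl D a c (a + c)) := by
    have e := Q_shear (fun a b c d : PV n => hl D (c + d) a (a + (c + d)))
    refine (Q_congr fun a b c d => hl_cast D ?_ ?_ ?_).trans (e.symm.trans h4) <;> simp only [add_assoc, add_comm, add_left_comm, add_self2, add_self2_left, add_self2_right, add_zero, zero_add]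
  have h10 : Q (fun a b c d : PV n => hl D (b + (c + d)) (a + c) (a + (b + d))) = Q (fun a _ c _ : PV n => hl D a c (a + c)) := by
    have e := Q_cnot (fun a b c d : PV n => hl D (c + d) a (a + (c + d)))
    refine (Q_congr fun a b c d => hl_cast D ?_ ?_ ?_).trans (e.symm.trans h4) <;> simp only [add_assoc, add_comm, add_left_comm, add_self2, add_self2_left, add_self2_right, add_zero, zero_add]
  have h11 : Q (fun a b c d : PV n => hl D (b + d) (a + (b + c)) (a + (c + d))) = Q (fun a _ c _ : PV n => hl D a c (a + c)) := by
    have e := Q_cnot (fun a b c d : PV n => hl D d (a + b) (a + (b + d)))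
    refine (Q_congr fun a b c d => hl_cast D ?_ ?_ ?_).trans (e.symm.trans h6) <;> simp only [add_assoc, add_comm, add_left_comm, add_self2, add_self2_left, add_self2_right, add_zero, zero_add]
  have h12 : Q (fun a b c d : PV n => hl D (a + d) (b + c) (a + (b + (c + d)))) = Q (fun a _ c _ : PV n => hl D a c (a + c)) := by
    have e := Q_had (fun a b c d : PV n => hl D (b + d) (a + c) (a + (b + (c + d))))
    refine (Q_congr fun a b c d => hl_cast D ?_ ?_ ?_).trans (e.symm.trans h7) <;> simp only [add_assoc, add_comm, add_left_comm, add_self2, add_self2_left, add_self2_right, add_zero, zero_add]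
  have h13 : Q (fun a b c d : PV n => hl D (b + (c + d)) (a + (b + c)) (a + d)) = Q (fun a _ c _ : PV n => hl D a c (a + c)) := by
    have e := Q_cnot (fun a b c d : PV n => hl D (c + d) (a + b) (a + (b + (c + d))))
    refine (Q_congr fun a b c d => hl_cast D ?_ ?_ ?_).trans (e.symm.trans h9) <;> simp only [add_assoc, add_comm, add_left_comm, add_self2, add_self2_left, add_self2_right, add_zero, zero_add]
  have h14 : Q (fun a b c d : PV n => hl D (a + (c + d)) (b + c) (a + (b + d))) = Q (fun a _ c _ : PV n => hl D a c (a + c)) := by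
    have e := Q_had (fun a b c d : PV n => hl D (b + (c + d)) (a + c) (a + (b + d)))
    refine (Q_congr fun a b c d => hl_cast D ?_ ?_ ?_).trans (e.symm.trans h10) <;> simp only [add_assoc, add_comm, add_left_comm, add_self2, add_self2_left, add_self2_right, add_zero, zero_add]
  simp only [Q_add, h0, h1, h2, h3, h4, h5, h6, h7, h8, h9, h10, h11, h12, h13, h14]
  ring

theorem doily {n : ℕ} {D : Set (Submodule F2 (PV n))} {s : PV n → F2} (hs : Sat D s)
    (a b c d : PV n) (hF : Fr (a, b, c, d)) :
      hl D a c (a + c)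
      + hl D b c (b + c)
      + hl D (a + b) c (a + (b + c))
      + hl D d a (a + d)
      + hl D (c + d) a (a + (c + d))
      + hl D d b (b + d)
      + hl D d (a + b) (a + (b + d))
      + hl D (b + d) (a + c) (a + (b + (c + d)))
      + hl D (c + d) b (b + (c + d))
      + hl D (c + d) (a + b) (a + (b + (c + d)))
      + hl D (b + (c + d)) (a + c) (a + (b + d))
      + hl D (b + d) (a + (b + c)) (a + (c + d))
      + hl D (a + d) (b + c) (a + (b + (c + d)))
      + hl D (b + (c + d)) (a + (b + c)) (a + d)
      + hl D (a + (c + d)) (b + c) (a + (b + d)) ≤ 12 := by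
  obtain ⟨h1, h2, h3, h4, h5, h6⟩ := hF
  simp only at h1 h2 h3 h4 h5 h6
  have k1 : symp b a = 1 := by rwa [symp_comm]
  have k2 : symp d c = 1 := by rwa [symp_comm]
  have k3 : symp c a = 0 := by rwa [symp_comm]
  have k4 : symp d a = 0 := by rwa [symp_comm]
  have k5 : symp c b = 0 := by rwa [symp_comm]
  have k6 : symp d b = 0 := by rwa [symp_comm]
  have g0 := grid hs d b (b + d) a c (a + c) (a + d) (b + c) (a + (b + (c + d))) (by simp [symp_add_left, symp_add_right, symp_self, h1, h2, h3, h4, h5, h6, k1, k2, k3, k4, k5, k6, one_add_one_F2]) (by simp only [add_assoc, add_comm, add_left_comm, add_self2, add_self2_left, add_self2_right, add_zero, zero_add]) (by simp only [add_assoc, add_comm, add_left_comm, add_self2, add_self2_left, add_self2_right, add_zero, zero_add]) (by simp only [add_assoc, add_comm, add_left_comm, add_self2, add_self2_left, add_self2_right, add_zero, zero_add]) (by simp only [add_assoc, add_comm, add_left_comm, add_self2, add_self2_left, add_self2_right, add_zero, zero_add]) (by simp only [add_assoc, add_comm, add_left_comm, add_self2, add_self2_left, add_self2_right, add_zero, 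zero_add])
  have g1 := grid hs d b (b + d) a (c + d) (a + (c + d)) (a + d) (b + (c + d)) (a + (b + c)) (by simp [symp_add_left, symp_add_right, symp_self, h1, h2, h3, h4, h5, h6, k1, k2, k3, k4, k5, k6, one_add_one_F2]) (by simp only [add_assoc, add_comm, add_left_comm, add_self2, add_self2_left, add_self2_right, add_zero, zero_add]) (by simp only [add_assoc, add_comm, add_left_comm, add_self2, add_self2_left, add_self2_right, add_zero, zero_add]) (by simp only [add_assoc, add_comm, add_left_comm, add_self2, add_self2_left, add_self2_right, add_zero, zero_add]) (by simp only [add_assoc, add_comm, add_left_comm, add_self2, add_self2_left, add_self2_right, add_zero, zero_add]) (by simp only [add_assoc, add_comm, add_left_comm, add_self2, add_self2_left, add_self2_right, add_zero, zero_add])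
  rw [hl_swap D a (c + d) (a + (c + d)),
    hl_rot D (a + d) (b + (c + d)) (a + (b + c)),
    hl_swap D b (c + d) (b + (c + d)),
    hl_swap2 D (b + d) (a + (c + d)) (a + (b + c))] at g1
  have g2 := grid hs d b (b + d) (a + b) c (a + (b + c)) (a + (b + d)) (b + c) (a + (c + d)) (by simp [symp_add_left, symp_add_right, symp_self, h1, h2, h3, h4, h5, h6, k1, k2, k3, k4, k5, k6, one_add_one_F2]) (by simp only [add_assoc, add_comm, add_left_comm, add_self2, add_self2_left, add_self2_right, add_zero, zero_add]) (by simp only [add_assoc, add_comm, add_left_comm, add_self2, add_self2_left, add_self2_right, add_zero, zero_add]) (by simp only [add_assoc, add_comm, add_left_comm, add_self2, add_self2_left, add_self2_right, add_zero, zero_add]) (by simp only [add_assoc, add_comm, add_left_comm, add_self2, add_self2_left, add_self2_right, add_zero, zero_add]) (by simp only [add_assoc, add_comm, add_left_comm, add_self2, add_self2_left, add_self2_right, add_zero, zero_add])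
  rw [hl_swap3 D (a + (b + d)) (b + c) (a + (c + d))] at g2
  have g3 := grid hs d b (b + d) (a + b) (c + d) (a + (b + (c + d))) (a + (b + d)) (b + (c + d)) (a + c) (by simp [symp_add_left, symp_add_right, symp_self, h1, h2, h3, h4, h5, h6, k1, k2, k3, k4, k5, k6, one_add_one_F2]) (by simp only [add_assoc, add_comm, add_left_comm, add_self2, add_self2_left, add_self2_right, add_zero, zero_add]) (by simp only [add_assoc, add_comm, add_left_comm, add_self2, add_self2_left, add_self2_right, add_zero, zero_add]) (by simp only [add_assoc, add_comm, add_left_comm, add_self2, add_self2_left, add_self2_right, add_zero, zero_add]) (by simp only [add_assoc, add_comm, add_left_comm, add_self2, add_self2_left, add_self2_right, add_zero, zero_add]) (by simp only [add_assoc, add_comm, add_left_comm, add_self2, add_self2_left, add_self2_right, add_zero, zero_add])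
  rw [hl_swap D (a + b) (c + d) (a + (b + (c + d))),
    hl_rot D (a + (b + d)) (b + (c + d)) (a + c),
    hl_swap D b (c + d) (b + (c + d)),
    hl_swap2 D (b + d) (a + (b + (c + d))) (a + c)] at g3
  have g4 := grid hs d a (a + d) (a + b) c (a + (b + c)) (a + (b + d)) (a + c) (b + (c + d)) (by simp [symp_add_left, symp_add_right, symp_self, h1, h2, h3, h4, h5, h6, k1, k2, k3, k4, k5, k6, one_add_one_F2]) (by simp only [add_assoc, add_comm, add_left_comm, add_self2, add_self2_left, add_self2_right, add_zero, zero_add]) (by simp only [add_assoc, add_comm, add_left_comm, add_self2, add_self2_left, add_self2_right, add_zero, zero_add]) (by simp only [add_assoc, add_comm, add_left_comm, add_self2, add_self2_left, add_self2_right, add_zero, zero_add]) (by simp only [add_assoc, add_comm, add_left_comm, add_self2, add_self2_left, add_self2_right, add_zero, zero_add]) (by simp only [add_assoc, add_comm, add_left_comm, add_self2, add_self2_left, add_self2_right, add_zero, zero_add])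
  rw [hl_swap3 D (a + (b + d)) (a + c) (b + (c + d)),
    hl_swap3 D (a + d) (a + (b + c)) (b + (c + d))] at g4
  have g5 := grid hs d a (a + d) (a + b) (c + d) (a + (b + (c + d))) (a + (b + d)) (a + (c + d)) (b + c) (by simp [symp_add_left, symp_add_right, symp_self, h1, h2, h3, h4, h5, h6, k1, k2, k3, k4, k5, k6, one_add_one_F2]) (by simp only [add_assoc, add_comm, add_left_comm, add_self2, add_self2_left, add_self2_right, add_zero, zero_add]) (by simp only [add_assoc, add_comm, add_left_comm, add_self2, add_self2_left, add_self2_right, add_zero, zero_add]) (by simp only [add_assoc, add_comm, add_left_comm, add_self2, add_self2_left, add_self2_right, add_zero, zero_add]) (by simp only [add_assoc, add_comm, add_left_comm, add_self2, add_self2_left, add_self2_right, add_zero, zero_add]) (by simp only [add_assoc, add_comm, add_left_comm, add_self2, add_self2_left, add_self2_right, add_zero, zero_add])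
  rw [hl_swap D (a + b) (c + d) (a + (b + (c + d))),
    hl_rot D (a + (b + d)) (a + (c + d)) (b + c),
    hl_swap D a (c + d) (a + (c + d)),
    hl_swap2 D (a + d) (a + (b + (c + d))) (b + c)] at g5
  have g6 := grid hs c b (b + c) a (c + d) (a + (c + d)) (a + c) (b + (c + d)) (a + (b + d)) (by simp [symp_add_left, symp_add_right, symp_self, h1, h2, h3, h4, h5, h6, k1, k2, k3, k4, k5, k6, one_add_one_F2]) (by simp only [add_assoc, add_comm, add_left_comm, add_self2, add_self2_left, add_self2_right, add_zero, zero_add]) (by simp only [add_assoc, add_comm, add_left_comm, add_self2, add_self2_left, add_self2_right, add_zero, zero_add]) (by simp only [add_assoc, add_comm, add_left_comm, add_self2, add_self2_left, add_self2_right, add_zero, zero_add]) (by simp only [add_assoc, add_comm, add_left_comm, add_self2, add_self2_left, add_self2_right, add_zero, zero_add]) (by simp only [add_assoc, add_comm, add_left_comm, add_self2, add_self2_left, add_self2_right, add_zero, zero_add])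
  rw [hl_swap D c b (b + c),
    hl_swap D a (c + d) (a + (c + d)),
    hl_swap D (a + c) (b + (c + d)) (a + (b + d)),
    hl_swap D c a (a + c),
    hl_swap D b (c + d) (b + (c + d)),
    hl_swap D (b + c) (a + (c + d)) (a + (b + d))] at g6
  have g7 := grid hs c b (b + c) (a + b) (c + d) (a + (b + (c + d))) (a + (b + c)) (b + (c + d)) (a + d) (by simp [symp_add_left, symp_add_right, symp_self, h1, h2, h3, h4, h5, h6, k1, k2, k3, k4, k5, k6, one_add_one_F2]) (by simp only [add_assoc, add_comm, add_left_comm, add_self2, add_self2_left, add_self2_right, add_zero, zero_add]) (by simp only [add_assoc, add_comm, add_left_comm, add_self2, add_self2_left, add_self2_right, add_zero, zero_add]) (by simp only [add_assoc, add_comm, add_left_comm, add_self2, add_self2_left, add_self2_right, add_zero, zero_add]) (by simp only [add_assoc, add_comm, add_left_comm, add_self2, add_self2_left, add_self2_right, add_zero, zero_add]) (by simp only [add_assoc, add_comm, add_left_comm, add_self2, add_self2_left, add_self2_right, add_zero, zero_add])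
  rw [hl_swap D c b (b + c),
    hl_swap D (a + b) (c + d) (a + (b + (c + d))),
    hl_swap D (a + (b + c)) (b + (c + d)) (a + d),
    hl_swap D c (a + b) (a + (b + c)),
    hl_swap D b (c + d) (b + (c + d)),
    hl_rot2 D (b + c) (a + (b + (c + d))) (a + d)] at g7
  have g8 := grid hs c a (a + c) (a + b) (c + d) (a + (b + (c + d))) (a + (b + c)) (a + (c + d)) (b + d) (by simp [symp_add_left, symp_add_right, symp_self, h1, h2, h3, h4, h5, h6, k1, k2, k3, k4, k5, k6, one_add_one_F2]) (by simp only [add_assoc, add_comm, add_left_comm, add_self2, add_self2_left, add_self2_right, add_zero, zero_add]) (by simp only [add_assoc, add_comm, add_left_comm, add_self2, add_self2_left, add_self2_right, add_zero, zero_add]) (by simp only [add_assoc, add_comm, add_left_comm, add_self2, add_self2_left, add_self2_right, add_zero, zero_add]) (by simp only [add_assoc, add_comm, add_left_comm, add_self2, add_self2_left, add_self2_right, add_zero, zero_add]) (by simp only [add_assoc, add_comm, add_left_comm, add_self2, add_self2_left, add_self2_right, add_zero, zero_add])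
  rw [hl_swap D c a (a + c),
    hl_swap D (a + b) (c + d) (a + (b + (c + d))),
    hl_rot2 D (a + (b + c)) (a + (c + d)) (b + d),
    hl_swap D c (a + b) (a + (b + c)),
    hl_swap D a (c + d) (a + (c + d)),
    hl_rot2 D (a + c) (a + (b + (c + d))) (b + d)] at g8
  have g9 := grid hs (b + d) (a + c) (a + (b + (c + d))) (a + (c + d)) (a + (b + d)) (b + c) (a + (b + c)) (b + (c + d)) (a + d) (by simp [symp_add_left, symp_add_right, symp_self, h1, h2, h3, h4, h5, h6, k1, k2, k3, k4, k5, k6, one_add_one_F2]) (by simp only [add_assoc, add_comm, add_left_comm, add_self2, add_self2_left, add_self2_right, add_zero, zero_add]) (by simp only [add_assoc, add_comm, add_left_comm, add_self2, add_self2_left, add_self2_right, add_zero, zero_add]) (by simp only [add_assoc, add_comm, add_left_comm, add_self2, add_self2_left, add_self2_right, add_zero, zero_add]) (by simp only [add_assoc, add_comm, add_left_comm, add_self2, add_self2_left, add_self2_right, add_zero, zero_add]) (by simp only [add_assoc, add_comm, add_left_comm, add_self2, add_self2_left, add_self2_right, add_zero, zero_add])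
  rw [hl_swap2 D (a + (c + d)) (a + (b + d)) (b + c),
    hl_swap D (a + (b + c)) (b + (c + d)) (a + d),
    hl_swap2 D (b + d) (a + (c + d)) (a + (b + c)),
    hl_rot2 D (a + c) (a + (b + d)) (b + (c + d)),
    hl_swap3 D (a + (b + (c + d))) (b + c) (a + d)] at g9
  omega

/-! ### Counting -/

theorem F2_cases (x : F2) : x = 0 ∨ x = 1 := by revert x; decide

/-- Integer lift of a scalar. -/
def lft (x : F2) : ℤ := if x = 1 then 1 else 0

theorem exists_symp {n : ℕ} (v : PV n) (hv : v ≠ 0) : ∃ u, symp v u = 1 := by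
  by_cases h1 : v.1 = 0
  · have h2 : v.2 ≠ 0 := fun h2 => hv (Prod.ext h1 h2)
    obtain ⟨i, hi⟩ := Function.ne_iff.mp h2
    refine ⟨(Pi.single i 1, 0), ?_⟩
    rcases F2_cases (v.2 i) with h | h
    · exact absurd h hi
    · simp [symp, Pi.single_apply, h]
  · obtain ⟨i, hi⟩ := Function.ne_iff.mp h1
    refine ⟨(0, Pi.single i 1), ?_⟩
    rcases F2_cases (v.1 i) with h | h
    · exact absurd h hi
    · simp [symp, Pi.single_apply, h]

theorem sum_lft {n : ℕ} (v : PV n) (hv : v ≠ 0) :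
    2 * ∑ y, lft (symp v y) = (Fintype.card (PV n) : ℤ) := by
  obtain ⟨u, hu⟩ := exists_symp v hv
  have h1 : ∑ y, lft (symp v y) = ∑ y, lft (symp v (y + u)) :=
    (Equiv.sum_comp (Equiv.addRight u) (fun y => lft (symp v y))).symm
  have h2 : ∑ y, lft (symp v y) + ∑ y, lft (symp v (y + u)) = (Fintype.card (PV n) : ℤ) := by
    rw [← Finset.sum_add_distrib]
    have : ∀ y : PV n, lft (symp v y) + lft (symp v (y + u)) = 1 := by
      intro y
      rw [symp_add_right, hu]
      rcases F2_cases (symp v y) with h | h <;> rw [h] <;> decide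
    simp [this]
  rw [two_mul]
  nth_rewrite 2 [h1]
  exact h2

theorem count_b {n : ℕ} (a c : PV n) (ha : a ≠ 0) (hc : c ≠ 0) (hac : a + c ≠ 0) :
    4 * ∑ y, (if symp a y = 1 ∧ symp c y = 0 then (1 : ℤ) else 0)
      = (Fintype.card (PV n) : ℤ) := by
  have h : ∀ p q : F2, 2 * (if p = 1 ∧ q = 0 then (1 : ℤ) else 0)
      = lft p + lft (p + q) - lft q := by decide
  have h1 : 2 * ∑ y, (if symp a y = 1 ∧ symp c y = 0 then (1 : ℤ) else 0)
      = ∑ y, lft (symp a y) + ∑ y, lft (symp (a + c) y) - ∑ y, lft (symp c y) := by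
    rw [Finset.mul_sum, ← Finset.sum_add_distrib, ← Finset.sum_sub_distrib]
    refine Finset.sum_congr rfl fun y _ => ?_
    rw [h, symp_add_left]
  have e1 := sum_lft a ha
  have e2 := sum_lft c hc
  have e3 := sum_lft _ hac
  linarith

theorem count_d {n : ℕ} (a b c : PV n) (ha : a ≠ 0) (hc : c ≠ 0) (hac : a + c ≠ 0)
    (h0 : symp a c = 0) (hb : symp a b = 1) :
    8 * ∑ y, (if symp a y = 0 ∧ symp c y = 1 ∧ symp b y = 0 then (1 : ℤ) else 0)
      = (Fintype.card (PV n) : ℤ) := by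
  have h : ∀ p q r : F2, 4 * (if p = 0 ∧ q = 1 ∧ r = 0 then (1 : ℤ) else 0)
      = lft q + lft (p + q) + lft (q + r) + lft (p + q + r) - lft p - lft r - lft (p + r) := by decide
  have h1 : 4 * ∑ y, (if symp a y = 0 ∧ symp c y = 1 ∧ symp b y = 0 then (1 : ℤ) else 0)
      = ∑ y, lft (symp c y) + ∑ y, lft (symp (a + c) y) + ∑ y, lft (symp (c + b) y)
        + ∑ y, lft (symp (a + c + b) y) - ∑ y, lft (symp a y) - ∑ y, lft (symp b y)
        - ∑ y, lft (symp (a + b) y) := by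
    rw [Finset.mul_sum]
    simp only [← Finset.sum_add_distrib, ← Finset.sum_sub_distrib]
    refine Finset.sum_congr rfl fun y _ => ?_
    rw [h]
    simp only [symp_add_left]
  have nz : ∀ v : PV n, symp a v = 1 → v ≠ 0 := by
    rintro v hv rfl
    simp [symp] at hv
  have e1 := sum_lft a ha
  have e2 := sum_lft c hc
  have e3 := sum_lft _ hac
  have e4 := sum_lft b (nz _ hb)
  have e5 := sum_lft (c + b) (nz _ (by simp [symp_add_right, h0, hb]))
  have e6 := sum_lft (a + c + b) (nz _ (by simp [symp_add_right, symp_self, h0, hb]))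
  have e7 := sum_lft (a + b) (nz _ (by simp [symp_add_right, symp_self, hb]))
  linarith

/-- Ordered bases of isotropic planes. -/
def Pr {n : ℕ} (a c : PV n) : Prop := a ≠ 0 ∧ c ≠ 0 ∧ a ≠ c ∧ symp a c = 0

theorem add_ne_zero_F2 {n : ℕ} {a c : PV n} (h : a ≠ c) : a + c ≠ 0 := by
  intro h'
  apply h
  have := add_self2_left c a
  rw [add_comm c a, h', add_zero] at this
  exact this.symm

theorem Fr_Pr {n : ℕ} {a b c d : PV n} (h : Fr (a, b, c, d)) : Pr a c := by
  obtain ⟨h1, h2, h3, h4, h5, h6⟩ := h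
  simp only at h1 h2 h3 h4 h5 h6
  refine ⟨?_, ?_, ?_, h3⟩
  · rintro rfl; simp [symp] at h1
  · rintro rfl; simp [symp] at h2
  · rintro rfl
    rw [symp_comm, h1] at h5
    exact absurd h5 (by decide)

theorem fiber_count {n : ℕ} (a c : PV n) (r : ℤ) :
    (open Classical in 32 * ∑ b, ∑ d, (if Fr (a, b, c, d) then r else 0)
      = (Fintype.card (PV n) : ℤ) ^ 2 * (if Pr a c then r else 0)) := by
  classical
  by_cases hP : Pr a c
  · rw [if_pos hP]
    obtain ⟨ha, hc, hne, h0⟩ := hP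
    have hac := add_ne_zero_F2 hne
    have key : ∀ b, 8 * ∑ d, (if Fr (a, b, c, d) then r else 0)
        = (if symp a b = 1 ∧ symp c b = 0 then (1 : ℤ) else 0) *
          ((Fintype.card (PV n) : ℤ) * r) := by
      intro b
      by_cases hb : symp a b = 1 ∧ symp c b = 0
      · rw [if_pos hb, one_mul, ← count_d a b c ha hc hac h0 hb.1, mul_assoc, Finset.sum_mul]
        congr 1
        refine Finset.sum_congr rfl fun d _ => ?_
        have : Fr (a, b, c, d) ↔ (symp a d = 0 ∧ symp c d = 1 ∧ symp b d = 0) := by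
          have := hb.2
          rw [symp_comm] at this
          simp only [Fr, hb.1, h0, this]
          tauto
        simp only [this]
        split_ifs <;> simp
      · rw [if_neg hb, zero_mul]
        have : ∀ d, ¬ Fr (a, b, c, d) := by
          rintro d ⟨h1, h2, h3, h4, h5, h6⟩
          exact hb ⟨h1, by rw [symp_comm]; exact h5⟩
        simp [this]
    have h2 : 8 * ∑ b, ∑ d, (if Fr (a, b, c, d) then r else 0)
        = (∑ b, (if symp a b = 1 ∧ symp c b = 0 then (1 : ℤ) else 0)) *
          ((Fintype.card (PV n) : ℤ) * r) := by
      rw [Finset.mul_sum, Finset.sum_mul]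
      exact Finset.sum_congr rfl fun b _ => key b
    have h3 := count_b a c ha hc hac
    linear_combination 4 * h2 + ((Fintype.card (PV n) : ℤ) * r) * h3
  · rw [if_neg hP, mul_zero]
    have : ∀ b d, ¬ Fr (a, b, c, d) := fun b d h => hP (Fr_Pr h)
    simp [this]

theorem Q_pair {n : ℕ} (φ : PV n → PV n → ℤ) :
    (open Classical in 32 * Q (fun a _ c _ => φ a c)
      = (Fintype.card (PV n) : ℤ) ^ 2 * ∑ a, ∑ c, (if Pr a c then φ a c else 0)) := by
  classical
  have h1 : Q (fun a _ c _ => φ a c)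
      = ∑ a, ∑ c, ∑ b, ∑ d, (if Fr (a, b, c, d) then φ a c else 0) := by
    unfold Q
    rw [Fintype.sum_prod_type]
    refine Finset.sum_congr rfl fun a _ => ?_
    rw [Fintype.sum_prod_type]
    refine Eq.trans ?_ (Finset.sum_comm (s := Finset.univ) (t := Finset.univ))
    refine Finset.sum_congr rfl fun b _ => ?_
    rw [Fintype.sum_prod_type]
  rw [h1, Finset.mul_sum, Finset.mul_sum]
  refine Finset.sum_congr rfl fun a _ => ?_
  rw [Finset.mul_sum, Finset.mul_sum]
  refine Finset.sum_congr rfl fun c _ => ?_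
  convert fiber_count a c (φ a c)

theorem finrank_span3 {n : ℕ} {a c : PV n} (ha : a ≠ 0) (hc : c ≠ 0) (hne : a ≠ c) :
    Module.finrank F2 (Submodule.span F2 {a, c, a + c}) = 2 := by
  have h1 : Submodule.span F2 {a, c, a + c} = Submodule.span F2 (Set.range ![a, c]) := by
    have hr : Set.range ![a, c] = {a, c} := by
      simp [Matrix.range_cons, Matrix.range_empty, Set.pair_comm]
    rw [hr]
    apply le_antisymm
    · rw [Submodule.span_le]
      have h1 : a ∈ Submodule.span F2 ({a, c} : Set (PV n)) := Submodule.subset_span (by simp)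
      have h2 : c ∈ Submodule.span F2 ({a, c} : Set (PV n)) := Submodule.subset_span (by simp)
      rintro x (rfl | rfl | rfl)
      · exact h1
      · exact h2
      · exact Submodule.add_mem _ h1 h2
    · apply Submodule.span_mono
      rintro x (rfl | rfl) <;> simp
  have hli : LinearIndependent F2 ![a, c] := by
    rw [LinearIndependent.pair_iff]
    intro s t hst
    have hac := add_ne_zero_F2 hne
    rcases F2_cases s with rfl | rfl <;> rcases F2_cases t with rfl | rfl <;> simp_all
  rw [h1, finrank_span_eq_card hli]
  simp

theorem span3_mem {n : ℕ} {a c : PV n} (h : Pr a c) :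
    Submodule.span F2 {a, c, a + c} ∈ Lset n 2 := by
  obtain ⟨ha, hc, hne, h0⟩ := h
  refine ⟨?_, finrank_span3 ha hc hne⟩
  have h0' : symp c a = 0 := by rwa [symp_comm]
  have z1 : ∀ v : PV n, symp v 0 = 0 := fun v => by simp [symp]
  have z2 : ∀ v : PV n, symp 0 v = 0 := fun v => by simp [symp]
  have sm : ∀ (r : F2) (u v : PV n), symp u v = 0 → symp (r • u) v = 0 := by
    intro r u v h
    rcases F2_cases r with rfl | rfl
    · rw [zero_smul, z2]
    · rwa [one_smul]
  intro x hx y hy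
  induction hx using Submodule.span_induction with
  | zero => exact z2 _
  | add u v _ _ h1 h2 => rw [symp_add_left, h1, h2, add_zero]
  | smul r u _ h1 => exact sm r u y h1
  | mem u hu =>
    induction hy using Submodule.span_induction with
    | zero => exact z1 _
    | add w v _ _ h1 h2 => rw [symp_add_right, h1, h2, add_zero]
    | smul r w _ h1 =>
      rw [symp_comm] at h1 ⊢
      exact sm r w u h1
    | mem w hw =>
      rcases hu with rfl | rfl | rfl <;> rcases hw with rfl | rfl | rfl <;>
        simp [symp_add_left, symp_add_right, symp_self, h0, h0']

theorem count_bases {n : ℕ} (S : Submodule F2 (PV n)) (hS : S ∈ Lset n 2) :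
    (open Classical in
      ∑ a, ∑ c, (if Pr a c ∧ Submodule.span F2 {a, c, a + c} = S then (1 : ℤ) else 0) = 6) := by
  classical
  have hiff : ∀ a c : PV n, (Pr a c ∧ Submodule.span F2 {a, c, a + c} = S) ↔
      (a, c) ∈ ((Finset.univ.filter (· ∈ S)).erase 0).offDiag := by
    intro a c
    simp only [Finset.mem_offDiag, Finset.mem_erase, Finset.mem_filter, Finset.mem_univ, true_and]
    constructor
    · rintro ⟨⟨ha, hc, hne, h0⟩, rfl⟩
      exact ⟨⟨ha, Submodule.subset_span (by simp)⟩, ⟨hc, Submodule.subset_span (by simp)⟩, hne⟩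
    · rintro ⟨⟨ha, haS⟩, ⟨hc, hcS⟩, hne⟩
      refine ⟨⟨ha, hc, hne, hS.1 a haS c hcS⟩, ?_⟩
      apply Submodule.eq_of_le_of_finrank_eq
      · rw [Submodule.span_le]
        rintro x (rfl | rfl | rfl)
        · exact haS
        · exact hcS
        · exact S.add_mem haS hcS
      · rw [finrank_span3 ha hc hne, hS.2]
  have hcard : (Finset.univ.filter (· ∈ S)).card = 4 := by
    rw [← Fintype.card_subtype]
    have := Module.card_eq_pow_finrank (K := F2) (V := S)
    rw [hS.2, ZMod.card] at this
    have h2 : Fintype.card {x // x ∈ S} = 4 := by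
      rw [← Nat.card_eq_fintype_card] at this ⊢
      exact this
    convert h2
  simp only [hiff]
  rw [← Fintype.sum_prod_type' (f := fun a c => if (a, c) ∈
    ((Finset.univ.filter (· ∈ S)).erase 0).offDiag then (1 : ℤ) else 0)]
  rw [Finset.sum_ite_mem, Finset.univ_inter, Finset.sum_const, Finset.offDiag_card,
    Finset.card_erase_of_mem (by simp), hcard]
  norm_num

theorem sum_hl {n : ℕ} (D : Set (Submodule F2 (PV n))) (hD : D ⊆ Lset n 2) :
    (open Classical in
      ∑ a, ∑ c, (if Pr a c then hl D a c (a + c) else 0) = 6 * (Nat.card D : ℤ)) := by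
  classical
  have hfin : D.Finite := Set.toFinite D
  have h1 : ∀ a c : PV n, (if Pr a c then hl D a c (a + c) else 0) =
      ∑ S ∈ hfin.toFinset,
        (if Pr a c ∧ Submodule.span F2 {a, c, a + c} = S then (1 : ℤ) else 0) := by
    intro a c
    by_cases hP : Pr a c
    · simp [hP, hl]
    · simp [hP]
  simp only [h1]
  rw [Finset.sum_congr rfl fun a _ => Finset.sum_comm, Finset.sum_comm]
  rw [Finset.sum_congr rfl fun S hS => count_bases S (hD (hfin.mem_toFinset.mp hS))]
  rw [Finset.sum_const, Nat.card_coe_set_eq, Set.ncard_eq_toFinset_card D hfin]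
  simp [mul_comm]

theorem Q_mono {n : ℕ} {F G : PV n → PV n → PV n → PV n → ℤ}
    (h : ∀ a b c d, Fr (a, b, c, d) → F a b c d ≤ G a b c d) : Q F ≤ Q G := by
  classical
  unfold Q
  refine Finset.sum_le_sum fun t _ => ?_
  split_ifs with hF
  · exact h _ _ _ _ hF
  · exact le_rfl

theorem Q_mul {n : ℕ} (r : ℤ) (F : PV n → PV n → PV n → PV n → ℤ) :
    Q (fun a b c d => r * F a b c d) = r * Q F := by
  classical
  unfold Q
  rw [Finset.mul_sum]
  refine Finset.sum_congr rfl fun t _ => ?_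
  split_ifs <;> simp

theorem main_count {n : ℕ} (D : Set (Submodule F2 (PV n))) (hD : D ⊆ Lset n 2)
    (s : PV n → F2) (hs : Sat D s) : 5 * (Nat.card D : ℤ) ≤ 4 * (Nat.card (Lset n 2) : ℤ) := by
  classical
  have h1 : 15 * Q (fun a _ c _ : PV n => hl D a c (a + c))
      ≤ 12 * Q (fun a _ c _ : PV n => hl (Lset n 2) a c (a + c)) := by
    rw [← Q_lines, ← Q_mul]
    refine Q_mono fun a b c d hF => ?_
    have hone : hl (Lset n 2) a c (a + c) = 1 := if_pos (span3_mem (Fr_Pr hF))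
    rw [hone]
    exact doily hs a b c d hF
  have h2 := Q_pair (n := n) (fun a c => hl D a c (a + c))
  have h3 := Q_pair (n := n) (fun a c => hl (Lset n 2) a c (a + c))
  rw [sum_hl D hD] at h2
  rw [sum_hl _ le_rfl] at h3
  have hK : (0 : ℤ) < (Fintype.card (PV n) : ℤ) ^ 2 := by
    have : 0 < Fintype.card (PV n) := Fintype.card_pos
    positivity
  have h4 : (Fintype.card (PV n) : ℤ) ^ 2 * (5 * (Nat.card D : ℤ))
      ≤ (Fintype.card (PV n) : ℤ) ^ 2 * (4 * (Nat.card (Lset n 2) : ℤ)) := by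
    linarith
  exact le_of_mul_le_mul_left h4 hK

/-- **`Pval(↓L^n_2) ≤ 4/5`.** For every `n ≥ 2`, any subset `D` of the 2-dimensional
isotropic subspaces of `F2^{2n}` admitting a pairwise consistent family of outcomes
satisfies `|D| ≤ (4/5)·|L^n_2|`. -/
theorem pval_L_n_2_le :
    ∀ n : ℕ, 2 ≤ n →
      ∀ D ⊆ Lset n 2,
        (∃ f : (S : Submodule F2 (PV n)) → (S → F2),
            (∀ S ∈ D, IsOutcome S (f S)) ∧
            (∀ S₁ ∈ D, ∀ S₂ ∈ D, ConsistentOn (f S₁) (f S₂))) →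
        (Nat.card D : ℝ) ≤ (4 / 5) * (Nat.card (Lset n 2) : ℝ) := by

  intro n _ D hD ⟨f, h1, h2⟩
  obtain ⟨s, hs⟩ := exists_sat D hD f h1 h2
  have h := main_count D hD s hs
  have h' : (5 : ℝ) * (Nat.card D : ℝ) ≤ 4 * (Nat.card (Lset n 2) : ℝ) := by exact_mod_cast h
  linarith
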